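/- Let ℳ_1 and ℳ_2 be linear subspaces of ℝ^d, each of codimension ν−1, with ℳ_1 ∩ ker(q) = ℳ_2 ∩ ker(q) = {0}. Then for all indices 1 ≤ m_j, p_j ≤ k_j (j = 1,…,ν), E_1[(τ_{1,m_1}+⋯+τ_{ν,m_ν})(τ_{1,p_1}+⋯+τ_{ν,p_ν})] = E_2[(τ_{1,m_1}+⋯+τ_{ν,m_ν})(τ_{1,p_1}+⋯+τ_{ν,p_ν})], where E_i denotes expectation over the probability distribution with density proportional to e^{−q(t)} restricted to ℳ_i. -/

import Mathlib

open MeasureTheory Real InnerProductSpace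

noncomputable section

variable {ν : ℕ}

/-- The coordinate index set of `ℝ^d`, `d = k_1 + ⋯ + k_ν`. -/
abbrev Idx (kk : Fin ν → ℕ) : Type := Σ j : Fin ν, Fin (kk j)

/-- The multi-index set, of cardinality `n = k_1 ⋯ k_ν`. -/
abbrev MIdx (kk : Fin ν → ℕ) : Type := ∀ j : Fin ν, Fin (kk j)

/-- The ambient Euclidean space `ℝ^d`. -/
abbrev Spc (kk : Fin ν → ℕ) : Type := EuclideanSpace ℝ (Idx kk)

/-- The coordinate functional `t ↦ τ_{j,i}`. -/
def coordL (kk : Fin ν → ℕ) (p : Idx kk) : Spc kk →ₗ[ℝ] ℝ where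
  toFun t := t p
  map_add' _ _ := rfl
  map_smul' _ _ := rfl

/-- The linear functional `t ↦ ⟨a_m, t⟩ = τ_{1,m_1} + ⋯ + τ_{ν,m_ν}`. -/
def linF (kk : Fin ν → ℕ) (m : MIdx kk) : Spc kk →ₗ[ℝ] ℝ :=
  ∑ j : Fin ν, coordL kk ⟨j, m j⟩

/-- The column `a_m` of the constraint matrix `A`. -/
def colA (kk : Fin ν → ℕ) (m : MIdx kk) : Spc kk :=
  (WithLp.equiv 2 (Idx kk → ℝ)).symm (fun p => if p.2 = m p.1 then 1 else 0)

/-- The quadratic form `q(t) = (1/2) ∑_m α_m (τ_{1,m_1} + ⋯ + τ_{ν,m_ν})²`. -/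
def qform (kk : Fin ν → ℕ) (α : MIdx kk → ℝ) (t : Spc kk) : ℝ :=
  (1/2) * ∑ m : MIdx kk, α m * (linF kk m t)^2

/-- The symmetric positive semidefinite matrix `B` with `q(t) = (1/2)⟨t, Bt⟩`,
given explicitly as `B = ∑_m α_m a_m a_mᵀ`. -/
def Bmat (kk : Fin ν → ℕ) (α : MIdx kk → ℝ) : Spc kk →ₗ[ℝ] Spc kk :=
  ∑ m : MIdx kk, α m • (linF kk m).smulRight (colA kk m)

/-- The sup norm `‖t‖_∞`. -/
def supNorm (kk : Fin ν → ℕ) (t : Spc kk) : ℝ := ‖(WithLp.equiv 2 (Idx kk → ℝ)) t‖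

/-- The subspace `ℒ = {t : τ_{j,k_j} = 0 for j = 2,…,ν}`. -/
def Lsub (kk : Fin ν → ℕ) (hk : ∀ j, 0 < kk j) : Submodule ℝ (Spc kk) :=
  ⨅ (j : {j : Fin ν // (j : ℕ) ≠ 0}),
    LinearMap.ker (coordL kk ⟨j.1, ⟨kk j.1 - 1, Nat.sub_lt (hk j.1) one_pos⟩⟩)

/-- The expectation of `f` under the probability distribution on a subspace `ℳ` with
density proportional to `e^{−q(t)}`. -/
def expM (kk : Fin ν → ℕ) (M : Submodule ℝ (Spc kk)) (α : MIdx kk → ℝ) (f : Spc kk → ℝ) : ℝ :=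
  (∫ t : ↥M, f (t : Spc kk) * Real.exp (-(qform kk α (t : Spc kk)))) /
    (∫ t : ↥M, Real.exp (-(qform kk α (t : Spc kk))))

/-!
The functionals `linF kk m` all vanish on the common kernel `K`, which contains the block-constant
vectors whose block values sum to zero, so `dim K ≥ ν - 1`. As `K` lies in `ker q`, it meets `ℳ`
trivially, and counting dimensions shows that every admissible `ℳ` is a complement of `K`.
Projecting along `K` is then a linear isomorphism `ℳ₁ ≃ ℳ₂` preserving every `linF kk m`, hence
also `q`. It carries Lebesgue measure to a constant multiple of Lebesgue measure, and this constant
cancels in the quotient defining the expectation.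
-/

section HaarQuotient

variable {G H : Type*}
    [AddGroup G] [TopologicalSpace G] [IsTopologicalAddGroup G] [MeasurableSpace G] [BorelSpace G]
    [AddGroup H] [TopologicalSpace H] [IsTopologicalAddGroup H] [MeasurableSpace H] [BorelSpace H]
    [LocallyCompactSpace H] [SecondCountableTopology H]
    (μ : Measure G) [μ.IsAddHaarMeasure] (μ' : Measure H) [μ'.IsAddHaarMeasure]

theorem integral_comp_continuousAddEquiv {E : Type*} [NormedAddCommGroup E]
    [NormedSpace ℝ E] (e : G ≃ₜ+ H) (f : H → E) :
    ∫ x, f (e x) ∂μ = (μ.map e).addHaarScalarFactor μ' • ∫ y, f y ∂μ' := by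
  have map_eq : μ.map e = (μ.map e).addHaarScalarFactor μ' • μ' :=
    Measure.isAddLeftInvariant_eq_smul _ _
  calc ∫ x, f (e x) ∂μ = ∫ y, f y ∂(μ.map e) :=
        (e.toHomeomorph.measurableEmbedding.integral_map f).symm
    _ = (μ.map e).addHaarScalarFactor μ' • ∫ y, f y ∂μ' := by
        rw [← integral_smul_nnreal_measure, ← map_eq]

theorem integral_comp_div_integral_comp_continuousAddEquiv {𝕜 : Type*} [RCLike 𝕜]
    (e : G ≃ₜ+ H) (f w : H → 𝕜) :
    (∫ x, f (e x) ∂μ) / (∫ x, w (e x) ∂μ) = (∫ y, f y ∂μ') / (∫ y, w y ∂μ') := by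
  have factor_ne_zero : (μ.map e).addHaarScalarFactor μ' ≠ 0 :=
    (Measure.addHaarScalarFactor_pos_of_isAddHaarMeasure _ _).ne'
  simp only [integral_comp_continuousAddEquiv μ μ' e, NNReal.smul_def, RCLike.real_smul_eq_coe_mul]
  exact mul_div_mul_left _ _ (by exact_mod_cast factor_ne_zero)

end HaarQuotient

theorem exists_linearEquiv_sub_mem_of_isCompl {R V : Type*} [Ring R] [AddCommGroup V] [Module R V]
    {K M₁ M₂ : Submodule R V} (h₁ : IsCompl K M₁) (h₂ : IsCompl K M₂) :
    ∃ L : M₁ ≃ₗ[R] M₂, ∀ t : M₁, (L t : V) - t ∈ K := by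
  refine ⟨(K.quotientEquivOfIsCompl M₁ h₁).symm ≪≫ₗ K.quotientEquivOfIsCompl M₂ h₂, fun t => ?_⟩
  rw [← Submodule.Quotient.eq, ← Submodule.quotientEquivOfIsCompl_symm_apply K M₂ h₂,
    LinearEquiv.trans_apply, LinearEquiv.symm_apply_apply,
    Submodule.quotientEquivOfIsCompl_symm_apply]

theorem integral_div_integral_eq_of_isCompl {V 𝕜 : Type*} [RCLike 𝕜]
    [NormedAddCommGroup V] [NormedSpace ℝ V] [FiniteDimensional ℝ V]
    [MeasurableSpace V] [BorelSpace V]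
    {K M₁ M₂ : Submodule ℝ V} (h₁ : IsCompl K M₁) (h₂ : IsCompl K M₂)
    (μ₁ : Measure M₁) [μ₁.IsAddHaarMeasure] (μ₂ : Measure M₂) [μ₂.IsAddHaarMeasure]
    {f w : V → 𝕜} (hf : ∀ s t, s - t ∈ K → f s = f t) (hw : ∀ s t, s - t ∈ K → w s = w t) :
    (∫ t : M₁, f t ∂μ₁) / (∫ t : M₁, w t ∂μ₁) = (∫ t : M₂, f t ∂μ₂) / (∫ t : M₂, w t ∂μ₂) := by
  obtain ⟨L, hL⟩ := exists_linearEquiv_sub_mem_of_isCompl h₁ h₂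
  simpa only [ContinuousLinearEquiv.toContinuousAddEquiv_coe,
    LinearEquiv.coe_toContinuousLinearEquiv', hf _ _ (hL _), hw _ _ (hL _)] using
    integral_comp_div_integral_comp_continuousAddEquiv μ₁ μ₂
      L.toContinuousLinearEquiv.toContinuousAddEquiv (fun t => f t) (fun t => w t)

theorem finrank_le_finrank_ker_add_one {F V : Type*} [Field F] [AddCommGroup V] [Module F V]
    [FiniteDimensional F V] (φ : Module.Dual F V) :
    Module.finrank F V ≤ Module.finrank F (LinearMap.ker φ) + 1 := by
  have rank_nullity := LinearMap.finrank_range_add_finrank_ker φ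
  have range_le := Submodule.finrank_le (LinearMap.range φ)
  rw [Module.finrank_self] at range_le
  lia

section CommonKernel

variable (kk : Fin ν → ℕ)

/-- The common kernel of the functionals `t ↦ τ_{1,m_1} + ⋯ + τ_{ν,m_ν}`. Unlike
`ker (Bmat kk α)`, with which it agrees for positive weights, it does not depend on `α`. -/
def commonKer : Submodule ℝ (Spc kk) := ⨅ m : MIdx kk, LinearMap.ker (linF kk m)

/-- The block-constant vector `τ_{j,i} = c_j`, as a linear function of `c ∈ ℝ^ν`. -/
def blockConst : (Fin ν → ℝ) →ₗ[ℝ] Spc kk :=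
  (WithLp.linearEquiv 2 ℝ (Idx kk → ℝ)).symm.toLinearMap ∘ₗ LinearMap.funLeft ℝ ℝ Sigma.fst

variable {kk}

theorem mem_commonKer {t : Spc kk} : t ∈ commonKer kk ↔ ∀ m, linF kk m t = 0 := by
  simp only [commonKer, Submodule.mem_iInf, LinearMap.mem_ker]

theorem sub_mem_commonKer {s t : Spc kk} :
    s - t ∈ commonKer kk ↔ ∀ m, linF kk m s = linF kk m t := by
  simp only [mem_commonKer, map_sub, sub_eq_zero]

theorem commonKer_le_ker_Bmat (α : MIdx kk → ℝ) : commonKer kk ≤ LinearMap.ker (Bmat kk α) := by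
  intro t ht
  simp [Bmat, mem_commonKer.1 ht]

theorem linF_apply (m : MIdx kk) (t : Spc kk) : linF kk m t = ∑ j, t ⟨j, m j⟩ :=
  LinearMap.sum_apply _ _ _

theorem linF_blockConst (m : MIdx kk) (c : Fin ν → ℝ) :
    linF kk m (blockConst kk c) = ∑ j, c j :=
  linF_apply m _

theorem blockConst_injective (hkk : ∀ j, 0 < kk j) : Function.Injective (blockConst kk) :=
  (WithLp.linearEquiv 2 ℝ (Idx kk → ℝ)).symm.injective.comp <|
    LinearMap.funLeft_injective_of_surjective ℝ ℝ Sigma.fst fun j => ⟨⟨j, 0, hkk j⟩, rfl⟩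

theorem le_finrank_commonKer_add_one (hkk : ∀ j, 0 < kk j) :
    ν ≤ Module.finrank ℝ (commonKer kk) + 1 := by
  let blockSum : Module.Dual ℝ (Fin ν → ℝ) := ∑ j, LinearMap.proj j
  have map_le : (LinearMap.ker blockSum).map (blockConst kk) ≤ commonKer kk := by
    rintro _ ⟨c, hc, rfl⟩
    refine mem_commonKer.2 fun m => ?_
    simpa [blockSum, linF_blockConst] using hc
  calc ν = Module.finrank ℝ (Fin ν → ℝ) := (Module.finrank_fin_fun ℝ).symm
    _ ≤ Module.finrank ℝ (LinearMap.ker blockSum) + 1 := finrank_le_finrank_ker_add_one blockSum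
    _ = Module.finrank ℝ ((LinearMap.ker blockSum).map (blockConst kk)) + 1 := by
        rw [LinearEquiv.finrank_eq (Submodule.equivMapOfInjective _ (blockConst_injective hkk) _)]
    _ ≤ Module.finrank ℝ (commonKer kk) + 1 := by gcongr; exact Submodule.finrank_mono map_le

theorem isCompl_commonKer (hkk : ∀ j, 0 < kk j) {α : MIdx kk → ℝ} {M : Submodule ℝ (Spc kk)}
    (hcodim : Module.finrank ℝ M + (ν - 1) = Module.finrank ℝ (Spc kk))
    (hMker : M ⊓ LinearMap.ker (Bmat kk α) = ⊥) : IsCompl (commonKer kk) M := by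
  have disjoint : Disjoint (commonKer kk) M :=
    (disjoint_iff.2 hMker).symm.mono_left (commonKer_le_ker_Bmat α)
  have dim_le : Module.finrank ℝ (Spc kk) ≤
      Module.finrank ℝ (commonKer kk) + Module.finrank ℝ M := by
    have := le_finrank_commonKer_add_one hkk
    omega
  exact (Submodule.isCompl_iff_disjoint _ _ dim_le).2 disjoint

theorem qform_eq_of_sub_mem_commonKer (α : MIdx kk → ℝ) {s t : Spc kk}
    (h : s - t ∈ commonKer kk) : qform kk α s = qform kk α t := by
  simp only [qform, sub_mem_commonKer.1 h]

end CommonKernel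

theorem expM_eq_of_isCompl_commonKer {kk : Fin ν → ℕ} {M₁ M₂ : Submodule ℝ (Spc kk)}
    (h₁ : IsCompl (commonKer kk) M₁) (h₂ : IsCompl (commonKer kk) M₂) (α : MIdx kk → ℝ)
    {f : Spc kk → ℝ} (hf : ∀ s t, s - t ∈ commonKer kk → f s = f t) :
    expM kk M₁ α f = expM kk M₂ α f :=
  integral_div_integral_eq_of_isCompl h₁ h₂ volume volume
    (f := fun t => f t * exp (-qform kk α t)) (w := fun t => exp (-qform kk α t))
    (fun s t h => by simp only [hf s t h, qform_eq_of_sub_mem_commonKer α h])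
    (fun s t h => by simp only [qform_eq_of_sub_mem_commonKer α h])

theorem statement9_general {kk : Fin ν → ℕ} (hkk : ∀ j, 0 < kk j) (α : MIdx kk → ℝ)
    {M₁ M₂ : Submodule ℝ (Spc kk)}
    (hcodim₁ : Module.finrank ℝ M₁ + (ν - 1) = Module.finrank ℝ (Spc kk))
    (hcodim₂ : Module.finrank ℝ M₂ + (ν - 1) = Module.finrank ℝ (Spc kk))
    (hMker₁ : M₁ ⊓ LinearMap.ker (Bmat kk α) = ⊥)
    (hMker₂ : M₂ ⊓ LinearMap.ker (Bmat kk α) = ⊥)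
    (g : (MIdx kk → ℝ) → ℝ) :
    expM kk M₁ α (fun t => g fun m => linF kk m t)
      = expM kk M₂ α (fun t => g fun m => linF kk m t) :=
  expM_eq_of_isCompl_commonKer (isCompl_commonKer hkk hcodim₁ hMker₁)
    (isCompl_commonKer hkk hcodim₂ hMker₂) α fun s t h => by simp only [sub_mem_commonKer.1 h]

/-- If `ℳ₁`, `ℳ₂` are subspaces of codimension `ν−1` with
`ℳ_i ∩ ker(q) = {0}`, then the correlations
`E[(τ_{1,m_1}+⋯+τ_{ν,m_ν})(τ_{1,p_1}+⋯+τ_{ν,p_ν})]` agree for the two distributions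
with density proportional to `e^{−q}` on `ℳ₁` and on `ℳ₂`. -/
theorem statement9 (ν : ℕ) (hν : 2 ≤ ν) (kk : Fin ν → ℕ) (hkk : ∀ j, 2 ≤ kk j)
    (α : MIdx kk → ℝ) (hα : ∀ m, 0 < α m)
    (M₁ M₂ : Submodule ℝ (Spc kk))
    (hcodim₁ : Module.finrank ℝ ↥M₁ + (ν - 1) = Module.finrank ℝ (Spc kk))
    (hcodim₂ : Module.finrank ℝ ↥M₂ + (ν - 1) = Module.finrank ℝ (Spc kk))
    (hMker₁ : M₁ ⊓ LinearMap.ker (Bmat kk α) = ⊥)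
    (hMker₂ : M₂ ⊓ LinearMap.ker (Bmat kk α) = ⊥)
    (m p : MIdx kk) :
    expM kk M₁ α (fun t => linF kk m t * linF kk p t)
      = expM kk M₂ α (fun t => linF kk m t * linF kk p t) := by
  exact statement9_general (fun j => two_pos.trans_le (hkk j)) α hcodim₁ hcodim₂ hMker₁ hMker₂
    fun x => x m * x p
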